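/- arXiv:2003.14141 — 5 statements merged into one kernel-verified Lean document; each statement's English description precedes it below -/
import Mathlib

section
/- Let ρ > 0, μ > 0 and a < 0 < b be real numbers. For p ∈ ℝ define λ(p) = Proj_{[-1,1]}(-p/μ) and F(p) = Proj_{[a,b]}( -(1/ρ)( p + μ λ(p) ) ). Then F(p) = 0 if and only if |p| ≤ μ. -/
/-- Projection onto the interval `[α, β]`: `Proj α β q = max α (min q β)`. -/
def Proj (α β q : ℝ) : ℝ := max α (min q β)

theorem proj_zero_iff (a b q : ℝ) (ha : a < 0) (hb : 0 < b) : Proj a b q = 0 ↔ q = 0 := by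
  unfold Proj
  grind

theorem mul_proj (μ p : ℝ) (hμ : 0 < μ) :
    μ * Proj (-1) 1 (-p/μ) = max (-μ) (min (-p) μ) := by
  unfold Proj
  rw [mul_max_of_nonneg _ _ hμ.le, mul_min_of_nonneg _ _ hμ.le, mul_div_cancel₀ _ hμ.ne']
  simp

theorem stmt_0 (ρ μ a b : ℝ) (hρ : 0 < ρ) (hμ : 0 < μ) (ha : a < 0) (hb : 0 < b) (p : ℝ) :
    Proj a b (-(1/ρ) * (p + μ * Proj (-1) 1 (-p/μ))) = 0 ↔ |p| ≤ μ := by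
  have h : -(1/ρ) ≠ 0 := neg_ne_zero.mpr (one_div_pos.mpr hρ).ne'
  rw [proj_zero_iff a b _ ha hb, mul_proj μ p hμ, mul_eq_zero, or_iff_right h, abs_le]
  grind
end

section
/- Let ρ > 0, μ > 0 and a < 0 < b be real numbers, and let p ∈ ℝ. Suppose z ∈ [a,b] and λ ∈ ℝ are such that λ is sign-compatible with z (i.e. λ = 1 if z > 0, λ = -1 if z < 0, and λ ∈ [-1,1] if z = 0) and (p + ρz + μλ)(v - z) ≥ 0 for all v ∈ [a,b]. Then λ = Proj_{[-1,1]}(-p/μ). -/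
/-- `lam` is sign-compatible with `z`, i.e. `lam ∈ ∂|·|(z)`. -/
def SignCompat (lam z : ℝ) : Prop :=
  (0 < z → lam = 1) ∧ (z < 0 → lam = -1) ∧ (z = 0 → lam ∈ Set.Icc (-1 : ℝ) 1)

theorem stmt_8 (ρ μ a b : ℝ) (hρ : 0 < ρ) (hμ : 0 < μ) (ha : a < 0) (hb : 0 < b)
    (p z lam : ℝ) (hz : z ∈ Set.Icc a b) (hsc : SignCompat lam z)
    (hvi : ∀ v ∈ Set.Icc a b, 0 ≤ (p + ρ * z + μ * lam) * (v - z)) :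
    lam = Proj (-1) 1 (-p/μ) := by
  obtain ⟨h1, h2, h3⟩ := hsc
  have h0 := hvi 0 ⟨ha.le, hb.le⟩
  unfold Proj
  rcases lt_trichotomy z 0 with h | h | h
  · have hl := h2 h
    subst hl
    have : 0 ≤ p + ρ * z + μ * (-1) := by
      by_contra hc
      push Not at hc
      nlinarith
    have hq : -p / μ ≤ -1 := by
      rw [div_le_iff₀ hμ]
      nlinarith
    rw [min_eq_left (by linarith), max_eq_left hq]
  · have hl := h3 h
    subst h
    have ea := hvi a ⟨le_refl _, by linarith⟩
    have eb := hvi b ⟨by linarith, le_refl _⟩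
    have e1 : p + μ * lam ≤ 0 := by
      by_contra hc
      push Not at hc
      nlinarith
    have e2 : 0 ≤ p + μ * lam := by
      by_contra hc
      push Not at hc
      nlinarith
    have hq : -p / μ = lam := by
      rw [div_eq_iff hμ.ne']
      linarith
    rw [hq, min_eq_left hl.2, max_eq_right hl.1]
  · have hl := h1 h
    subst hl
    have : p + ρ * z + μ * 1 ≤ 0 := by
      by_contra hc
      push Not at hc
      nlinarith
    have hq : 1 ≤ -p / μ := by
      rw [le_div_iff₀ hμ]
      nlinarith
    rw [min_eq_right hq, max_eq_right (by norm_num)]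
end

section
/- Let ρ > 0, μ > 0 and a < 0 < b be real numbers, and let p ∈ ℝ. Suppose (z₁, λ₁) and (z₂, λ₂) are two pairs such that for i = 1, 2: zᵢ ∈ [a,b], λᵢ is sign-compatible with zᵢ (λᵢ = 1 if zᵢ > 0, λᵢ = -1 if zᵢ < 0, λᵢ ∈ [-1,1] if zᵢ = 0), and (p + ρzᵢ + μλᵢ)(v - zᵢ) ≥ 0 for all v ∈ [a,b]. Then z₁ = z₂ and λ₁ = λ₂. -/
theorem lam_mono (l m z w : ℝ) (h1 : SignCompat l z) (h2 : SignCompat m w) (h : z < w) :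
    l ≤ m := by
  obtain ⟨a1, a2, a3⟩ := h1
  obtain ⟨b1, b2, b3⟩ := h2
  simp only [Set.mem_Icc] at a3 b3
  rcases lt_trichotomy z 0 with hz | hz | hz
  · rw [a2 hz]
    rcases lt_trichotomy w 0 with hw | hw | hw
    · rw [b2 hw]
    · exact (b3 hw).1
    · rw [b1 hw]; norm_num
  · rw [b1 (by linarith)]; exact (a3 hz).2
  · rw [a1 hz, b1 (by linarith)]

theorem not_lt_aux (ρ μ p z l w m : ℝ) (hρ : 0 < ρ) (hμ : 0 < μ)
    (h1 : SignCompat l z) (h2 : SignCompat m w)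
    (e1 : 0 ≤ (p + ρ * z + μ * l) * (w - z)) (e2 : 0 ≤ (p + ρ * w + μ * m) * (z - w)) :
    ¬ z < w := by
  intro h
  have hl := lam_mono l m z w h1 h2 h
  have k1 : 0 ≤ μ * (m - l) * (w - z) :=
    mul_nonneg (mul_nonneg hμ.le (by linarith)) (by linarith)
  have k2 : 0 < ρ * (w - z) * (w - z) :=
    mul_pos (mul_pos hρ (by linarith)) (by linarith)
  nlinarith

theorem zero_aux (a b c : ℝ) (ha : a < 0) (hb : 0 < b)
    (h : ∀ v ∈ Set.Icc a b, 0 ≤ c * (v - 0)) : c = 0 := by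
  have h1 := h a ⟨le_refl _, by linarith⟩
  have h2 := h b ⟨by linarith, le_refl _⟩
  rcases lt_trichotomy c 0 with hc | hc | hc
  · nlinarith
  · exact hc
  · nlinarith

theorem stmt_9 (ρ μ a b : ℝ) (hρ : 0 < ρ) (hμ : 0 < μ) (ha : a < 0) (hb : 0 < b)
    (p z₁ lam₁ z₂ lam₂ : ℝ)
    (hz₁ : z₁ ∈ Set.Icc a b) (hsc₁ : SignCompat lam₁ z₁)
    (hvi₁ : ∀ v ∈ Set.Icc a b, 0 ≤ (p + ρ * z₁ + μ * lam₁) * (v - z₁))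
    (hz₂ : z₂ ∈ Set.Icc a b) (hsc₂ : SignCompat lam₂ z₂)
    (hvi₂ : ∀ v ∈ Set.Icc a b, 0 ≤ (p + ρ * z₂ + μ * lam₂) * (v - z₂)) :
    z₁ = z₂ ∧ lam₁ = lam₂ := by
  have hz : z₁ = z₂ := le_antisymm
    (not_lt.1 (not_lt_aux ρ μ p z₂ lam₂ z₁ lam₁ hρ hμ hsc₂ hsc₁ (hvi₂ _ hz₁) (hvi₁ _ hz₂)))
    (not_lt.1 (not_lt_aux ρ μ p z₁ lam₁ z₂ lam₂ hρ hμ hsc₁ hsc₂ (hvi₁ _ hz₂) (hvi₂ _ hz₁)))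
  refine ⟨hz, ?_⟩
  subst hz
  rcases lt_trichotomy z₁ 0 with h | h | h
  · rw [hsc₁.2.1 h, hsc₂.2.1 h]
  · subst h
    have h1 := zero_aux a b _ ha hb hvi₁
    have h2 := zero_aux a b _ ha hb hvi₂
    exact mul_left_cancel₀ hμ.ne' (by linarith)
  · rw [hsc₁.1 h, hsc₂.1 h]
end

section
/- Let ρ > 0, μ > 0 and a < 0 < b be real numbers, and let p ∈ ℝ. Define λ = Proj_{[-1,1]}(-p/μ) and z = Proj_{[a,b]}( -(1/ρ)(p + μλ) ). Then z ∈ [a,b], λ is sign-compatible with z (λ = 1 if z > 0, λ = -1 if z < 0, λ ∈ [-1,1] if z = 0), and (p + ρz + μλ)(v - z) ≥ 0 for all v ∈ [a,b]. -/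
theorem Proj_cases_aux (α β q : ℝ) (h : α < β) :
    (q ≤ α ∧ Proj α β q = α) ∨ (α < q ∧ q < β ∧ Proj α β q = q) ∨ (β ≤ q ∧ Proj α β q = β) := by
  unfold Proj
  rcases le_or_gt q α with h1 | h1
  · left
    exact ⟨h1, by rw [min_eq_left (by linarith), max_eq_left h1]⟩
  · rcases lt_or_ge q β with h2 | h2
    · right; left
      exact ⟨h1, h2, by rw [min_eq_left h2.le, max_eq_right h1.le]⟩
    · right; right
      exact ⟨h2, by rw [min_eq_right h2, max_eq_right h.le]⟩

theorem stmt_10 (ρ μ a b : ℝ) (hρ : 0 < ρ) (hμ : 0 < μ) (ha : a < 0) (hb : 0 < b) (p : ℝ) :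
    (Proj a b (-(1/ρ) * (p + μ * Proj (-1) 1 (-p/μ))) ∈ Set.Icc a b) ∧
    SignCompat (Proj (-1) 1 (-p/μ)) (Proj a b (-(1/ρ) * (p + μ * Proj (-1) 1 (-p/μ)))) ∧
    ∀ v ∈ Set.Icc a b,
      0 ≤ (p + ρ * Proj a b (-(1/ρ) * (p + μ * Proj (-1) 1 (-p/μ)))
             + μ * Proj (-1) 1 (-p/μ))
          * (v - Proj a b (-(1/ρ) * (p + μ * Proj (-1) 1 (-p/μ)))) := by
  have hl := Proj_cases_aux (-1) 1 (-p/μ) (by norm_num)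
  have hc : μ * (-p/μ) = -p := by field_simp
  generalize Proj (-1) 1 (-p/μ) = l at *
  generalize -p/μ = c at *
  have hz := Proj_cases_aux a b (-(1/ρ) * (p + μ * l)) (by linarith)
  have hq : ρ * (-(1/ρ) * (p + μ * l)) = -(p + μ * l) := by field_simp
  generalize Proj a b (-(1/ρ) * (p + μ * l)) = z at *
  generalize -(1/ρ) * (p + μ * l) = q at *
  have hq2 : ρ * q = μ * (c - l) := by linarith
  have hl1 : -1 ≤ l ∧ l ≤ 1 := by
    rcases hl with ⟨_, h⟩ | ⟨_, _, h⟩ | ⟨_, h⟩ <;> constructor <;> linarith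
  have hpos : 0 < q → l = 1 := by
    intro h
    have h1 : 0 < μ * (c - l) := hq2 ▸ mul_pos hρ h
    have h2 : 0 < c - l := (mul_pos_iff_of_pos_left hμ).1 h1
    rcases hl with ⟨_, h⟩ | ⟨_, _, h⟩ | ⟨_, h⟩ <;> linarith
  have hneg : q < 0 → l = -1 := by
    intro h
    have h1 : μ * (c - l) < 0 := hq2 ▸ mul_neg_of_pos_of_neg hρ h
    have h2 : c - l < 0 := by
      by_contra h3
      push Not at h3
      have := mul_nonneg hμ.le h3
      linarith
    rcases hl with ⟨_, h⟩ | ⟨_, _, h⟩ | ⟨_, h⟩ <;> linarith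
  have hfac : p + ρ * z + μ * l = ρ * (z - q) := by linarith
  rw [hfac]
  refine ⟨?_, ⟨fun h => hpos ?_, fun h => hneg ?_, fun _ => hl1⟩, ?_⟩
  · rcases hz with ⟨_, h⟩ | ⟨_, _, h⟩ | ⟨_, h⟩ <;> constructor <;> linarith
  · rcases hz with ⟨_, h⟩ | ⟨_, _, h⟩ | ⟨_, h⟩ <;> linarith
  · rcases hz with ⟨_, h⟩ | ⟨_, _, h⟩ | ⟨_, h⟩ <;> linarith
  · rintro v ⟨hv1, hv2⟩
    rw [mul_assoc]
    apply mul_nonneg hρ.le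
    rcases hz with ⟨_, h⟩ | ⟨_, _, h⟩ | ⟨_, h⟩
    · exact mul_nonneg (by linarith) (by linarith)
    · simp [h]
    · exact mul_nonneg_of_nonpos_of_nonpos (by linarith) (by linarith)
end

section
/- Let ρ > 0, μ > 0 and a < 0 < b be real numbers, and let p ∈ ℝ. For z, λ ∈ ℝ, the following are equivalent: (1) z ∈ [a,b], λ is sign-compatible with z (λ = 1 if z > 0, λ = -1 if z < 0, λ ∈ [-1,1] if z = 0), and (p + ρz + μλ)(v - z) ≥ 0 for all v ∈ [a,b]; (2) λ = Proj_{[-1,1]}(-p/μ) and z = Proj_{[a,b]}( -(1/ρ)( p + μ Proj_{[-1,1]}(-p/μ) ) ). -/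
theorem proj_char (α β q x : ℝ) (h : α ≤ β) :
    x = Proj α β q ↔ (x ∈ Set.Icc α β ∧ ∀ v ∈ Set.Icc α β, 0 ≤ (x - q) * (v - x)) := by
  unfold Proj
  constructor
  · intro hx
    have hx1 : (x = α ∧ q ≤ α) ∨ (x = β ∧ β ≤ q) ∨ (x = q ∧ α ≤ q ∧ q ≤ β) := by grind
    refine ⟨by grind, ?_⟩
    rintro v ⟨h1, h2⟩
    rcases hx1 with ⟨e, h3⟩ | ⟨e, h3⟩ | ⟨e, h3⟩
    · exact mul_nonneg (by linarith) (by linarith)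
    · exact mul_nonneg_of_nonpos_of_nonpos (by linarith) (by linarith)
    · simp [e]
  · rintro ⟨⟨h1, h2⟩, h3⟩
    have k := h3 (max α (min q β)) ⟨le_max_left _ _, max_le h (min_le_right _ _)⟩
    rcases le_total q α with hq | hq
    · rw [min_eq_left (hq.trans h), max_eq_left hq] at k ⊢
      nlinarith
    · rcases le_total q β with hq' | hq'
      · rw [min_eq_left hq', max_eq_right hq] at k ⊢
        nlinarith
      · rw [min_eq_right hq', max_eq_right h] at k ⊢
        nlinarith

theorem sign_char (ρ μ a b : ℝ) (hρ : 0 < ρ) (hμ : 0 < μ) (ha : a < 0) (hb : 0 < b)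
    (p z lam : ℝ) (hz : z = Proj a b (-(1/ρ) * (p + μ * lam))) :
    SignCompat lam z ↔ lam = Proj (-1) 1 (-p/μ) := by
  obtain ⟨t, ht⟩ : ∃ t, t = -p/μ := ⟨_, rfl⟩
  obtain ⟨q, hq⟩ : ∃ q, q = -(1/ρ) * (p + μ * lam) := ⟨_, rfl⟩
  have hqt : q = (μ / ρ) * (t - lam) := by
    rw [hq, ht]; field_simp; ring
  have hc : 0 < μ / ρ := div_pos hμ hρ
  rw [← hq] at hz
  rw [← ht]
  have hs : (lam < t ∧ 0 < q) ∨ (t < lam ∧ q < 0) ∨ (t = lam ∧ q = 0) := by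
    rcases lt_trichotomy lam t with h | h | h
    · exact Or.inl ⟨h, by rw [hqt]; exact mul_pos hc (by linarith)⟩
    · exact Or.inr (Or.inr ⟨h.symm, by rw [hqt, h]; simp⟩)
    · exact Or.inr (Or.inl ⟨h, by rw [hqt]; exact mul_neg_of_pos_of_neg hc (by linarith)⟩)
  clear hqt hq ht hc
  unfold Proj at *
  unfold SignCompat
  simp only [Set.mem_Icc]
  rcases hs with ⟨h1, h2⟩ | ⟨h1, h2⟩ | ⟨h1, h2⟩
  · have : 0 < z := by rw [hz]; exact lt_max_of_lt_right (lt_min h2 hb)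
    grind
  · have : z < 0 := by rw [hz]; exact max_lt ha (min_lt_of_left_lt h2)
    grind
  · have : z = 0 := by rw [hz, h2, min_eq_left hb.le, max_eq_right ha.le]
    grind

theorem stmt_11 (ρ μ a b : ℝ) (hρ : 0 < ρ) (hμ : 0 < μ) (ha : a < 0) (hb : 0 < b)
    (p z lam : ℝ) :
    (z ∈ Set.Icc a b ∧ SignCompat lam z ∧
      ∀ v ∈ Set.Icc a b, 0 ≤ (p + ρ * z + μ * lam) * (v - z)) ↔
    (lam = Proj (-1) 1 (-p/μ) ∧
      z = Proj a b (-(1/ρ) * (p + μ * Proj (-1) 1 (-p/μ)))) := by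
  rw [show (lam = Proj (-1) 1 (-p/μ) ∧
      z = Proj a b (-(1/ρ) * (p + μ * Proj (-1) 1 (-p/μ)))) ↔
      (lam = Proj (-1) 1 (-p/μ) ∧ z = Proj a b (-(1/ρ) * (p + μ * lam))) from
      and_congr_right (fun h => by rw [← h])]
  have key : z = Proj a b (-(1/ρ) * (p + μ * lam)) ↔
      (z ∈ Set.Icc a b ∧ ∀ v ∈ Set.Icc a b, 0 ≤ (p + ρ * z + μ * lam) * (v - z)) := by
    rw [proj_char _ _ _ _ (ha.trans hb).le]
    refine and_congr_right fun _ => forall_congr' fun v => imp_congr_right fun _ => ?_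
    have e : (p + ρ * z + μ * lam) * (v - z)
        = ρ * ((z - -(1/ρ) * (p + μ * lam)) * (v - z)) := by
      field_simp; ring
    rw [e, mul_nonneg_iff_of_pos_left hρ]
  constructor
  · rintro ⟨h1, h2, h3⟩
    have hz := key.2 ⟨h1, h3⟩
    exact ⟨(sign_char ρ μ a b hρ hμ ha hb p z lam hz).1 h2, hz⟩
  · rintro ⟨h1, hz⟩
    exact ⟨(key.1 hz).1, (sign_char ρ μ a b hρ hμ ha hb p z lam hz).2 h1, (key.1 hz).2⟩
end
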